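/- For all natural numbers n and m, each of the Möbius strip boards (4+2n)″×(3+2m), (5+2n)″×(4+2m), (4+2n)″×(5+2m), (6+2n)″×(6+2m), and (8+2n)″×(4+2m) admits a fault-free domino tiling. -/

import Mathlib

/-- Adjacency on the Möbius strip board `a″ × b` (height `a`, length `b`):
cells `(i,j)` and `(i+1,j)` (vertical neighbors), or `(i,j)` and `(i,j+1)`
(horizontal neighbors), or `(i, b-1)` and `(a-1-i, 0)` (horizontal neighbors
across the half-twisted seam). -/
def mobAdj (a b : ℕ) (c d : Fin a × Fin b) : Prop :=
  (c.2 = d.2 ∧ ((c.1 : ℕ) + 1 = (d.1 : ℕ) ∨ (d.1 : ℕ) + 1 = (c.1 : ℕ))) ∨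
  (c.1 = d.1 ∧ ((c.2 : ℕ) + 1 = (d.2 : ℕ) ∨ (d.2 : ℕ) + 1 = (c.2 : ℕ))) ∨
  ((c.2 : ℕ) = b - 1 ∧ (d.2 : ℕ) = 0 ∧ (d.1 : ℕ) = a - 1 - (c.1 : ℕ)) ∨
  ((d.2 : ℕ) = b - 1 ∧ (c.2 : ℕ) = 0 ∧ (c.1 : ℕ) = a - 1 - (d.1 : ℕ))

/-- A tiling of the Möbius strip board: a set of dominoes (unordered pairs of
adjacent cells) such that every cell belongs to exactly one domino. -/
def mobIsTiling (a b : ℕ) (T : Set (Sym2 (Fin a × Fin b))) : Prop :=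
  (∀ p ∈ T, ∃ c d, mobAdj a b c d ∧ p = s(c, d)) ∧
  (∀ x : Fin a × Fin b, ∃! p, p ∈ T ∧ x ∈ p)

/-- A tiling of the Möbius strip board is fault-free if:
* every horizontal fault-line indexed by `i` with `i + 1 < a` is crossed — because
  of the half-twist the cut between rows `i` and `i+1` is identified with the cut
  between rows `a-2-i` and `a-1-i`, so it is crossed by a vertical domino on rows
  `(k, k+1)` with `k = i` or `k = a-2-i`;
* every vertical fault-line between columns `j` and `j+1` (for `j + 1 < b`) is
  crossed by a horizontal domino `{(i,j),(i,j+1)}`;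
* the seam cut is crossed by a wrapping domino `{(i,b-1),(a-1-i,0)}`. -/
def mobFaultFree (a b : ℕ) (T : Set (Sym2 (Fin a × Fin b))) : Prop :=
  (∀ i : ℕ, i + 1 < a → ∃ c d : Fin a × Fin b,
      s(c, d) ∈ T ∧ c.2 = d.2 ∧ (d.1 : ℕ) = (c.1 : ℕ) + 1 ∧
      ((c.1 : ℕ) = i ∨ (c.1 : ℕ) = a - 2 - i)) ∧
  (∀ j : ℕ, j + 1 < b → ∃ c d : Fin a × Fin b,
      s(c, d) ∈ T ∧ c.1 = d.1 ∧ (c.2 : ℕ) = j ∧ (d.2 : ℕ) = j + 1) ∧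
  (∃ c d : Fin a × Fin b, s(c, d) ∈ T ∧ (c.2 : ℕ) = b - 1 ∧ (d.2 : ℕ) = 0 ∧
      (d.1 : ℕ) = a - 1 - (c.1 : ℕ))

/-- The Möbius strip board `a″ × b` admits a fault-free domino tiling. -/
def mobFaultFreeTileable (a b : ℕ) : Prop :=
  ∃ T : Set (Sym2 (Fin a × Fin b)), mobIsTiling a b T ∧ mobFaultFree a b T

/-- A tiling encoded by directions: 0 = right, 1 = left, 2 = down, 3 = up. -/
def mOk (a b : ℕ) (t : ℕ → ℕ → ℕ) : Prop :=
  ∀ i < a, ∀ j < b,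
    (t i j = 0 ∧ ((j + 1 < b ∧ t i (j + 1) = 1) ∨ (j + 1 = b ∧ t (a - 1 - i) 0 = 1))) ∨
    (t i j = 1 ∧ ((0 < j ∧ t i (j - 1) = 0) ∨ (j = 0 ∧ t (a - 1 - i) (b - 1) = 0))) ∨
    (t i j = 2 ∧ i + 1 < a ∧ t (i + 1) j = 3) ∨
    (t i j = 3 ∧ 0 < i ∧ t (i - 1) j = 2)

def mHor (a b : ℕ) (t : ℕ → ℕ → ℕ) : Prop :=
  ∀ i < a - 1, ∃ j < b, t i j = 2 ∨ t (a - 2 - i) j = 2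

def mVer (a b : ℕ) (t : ℕ → ℕ → ℕ) : Prop :=
  ∀ j < b, ∃ i < a, t i j = 0

def mGood (a b : ℕ) (t : ℕ → ℕ → ℕ) : Prop :=
  mOk a b t ∧ mHor a b t ∧ mVer a b t

instance (a b : ℕ) (t : ℕ → ℕ → ℕ) : Decidable (mGood a b t) := by
  unfold mGood mOk mHor mVer
  refine @instDecidableAnd _ _ ?_ (@instDecidableAnd _ _ ?_ ?_)
  · exact @Nat.decidableBallLT _ _ fun i _ => @Nat.decidableBallLT _ _ fun j _ => by infer_instance
  · exact @Nat.decidableBallLT _ _ fun i _ => Nat.decidableExistsLT _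
  · exact @Nat.decidableBallLT _ _ fun i _ => Nat.decidableExistsLT _

def mRel (a b : ℕ) (t : ℕ → ℕ → ℕ) (c d : Fin a × Fin b) : Prop :=
  (t c.1 c.2 = 0 ∧ t d.1 d.2 = 1 ∧ (((c.1 : ℕ) = d.1 ∧ (d.2 : ℕ) = c.2 + 1) ∨
    ((c.2 : ℕ) = b - 1 ∧ (d.2 : ℕ) = 0 ∧ (d.1 : ℕ) = a - 1 - c.1))) ∨
  (t c.1 c.2 = 1 ∧ t d.1 d.2 = 0 ∧ (((c.1 : ℕ) = d.1 ∧ (c.2 : ℕ) = d.2 + 1) ∨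
    ((d.2 : ℕ) = b - 1 ∧ (c.2 : ℕ) = 0 ∧ (c.1 : ℕ) = a - 1 - d.1))) ∨
  (t c.1 c.2 = 2 ∧ t d.1 d.2 = 3 ∧ (c.2 : ℕ) = d.2 ∧ (d.1 : ℕ) = c.1 + 1) ∨
  (t c.1 c.2 = 3 ∧ t d.1 d.2 = 2 ∧ (c.2 : ℕ) = d.2 ∧ (c.1 : ℕ) = d.1 + 1)

lemma mRel_symm {a b t c d} (h : mRel a b t c d) : mRel a b t d c := by
  unfold mRel at *
  rcases h with ⟨h0, h1, h2⟩ | ⟨h0, h1, h2⟩ | ⟨h0, h1, h2, h3⟩ | ⟨h0, h1, h2, h3⟩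
  · refine Or.inr (Or.inl ⟨h1, h0, ?_⟩); omega
  · refine Or.inl ⟨h1, h0, ?_⟩; omega
  · exact Or.inr (Or.inr (Or.inr ⟨h1, h0, h2.symm, h3⟩))
  · exact Or.inr (Or.inr (Or.inl ⟨h1, h0, h2.symm, h3⟩))

lemma mRel_unique {a b t c d e} (h : mRel a b t c d) (h' : mRel a b t c e) : d = e := by
  obtain ⟨⟨c1, hc1⟩, c2, hc2⟩ := c
  obtain ⟨⟨d1, hd1⟩, d2, hd2⟩ := d
  obtain ⟨⟨e1, he1⟩, e2, he2⟩ := e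
  simp only [mRel, Prod.mk.injEq, Fin.mk.injEq] at *
  omega

lemma mRel_adj {a b t c d} (h : mRel a b t c d) : mobAdj a b c d := by
  obtain ⟨⟨c1, hc1⟩, c2, hc2⟩ := c
  obtain ⟨⟨d1, hd1⟩, d2, hd2⟩ := d
  simp only [mRel, mobAdj, Fin.mk.injEq] at *
  omega

lemma mRel_ex {a b t} (h : mOk a b t) (c : Fin a × Fin b) : ∃ d, mRel a b t c d := by
  obtain ⟨⟨i, hi⟩, j, hj⟩ := c
  rcases h i hi j hj with ⟨h0, ⟨h1, h2⟩ | ⟨h1, h2⟩⟩ | ⟨h0, ⟨h1, h2⟩ | ⟨h1, h2⟩⟩ |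
    ⟨h0, h1, h2⟩ | ⟨h0, h1, h2⟩
  · exact ⟨(⟨i, hi⟩, ⟨j + 1, h1⟩), by simp [mRel, h0, h2]⟩
  · exact ⟨(⟨a - 1 - i, by omega⟩, ⟨0, by omega⟩), by simp [mRel, h0, h2]; omega⟩
  · exact ⟨(⟨i, hi⟩, ⟨j - 1, by omega⟩), by simp [mRel, h0, h2]; omega⟩
  · exact ⟨(⟨a - 1 - i, by omega⟩, ⟨b - 1, by omega⟩), by simp [mRel, h0, h2]; omega⟩
  · exact ⟨(⟨i + 1, h1⟩, ⟨j, hj⟩), by simp [mRel, h0, h2]⟩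
  · exact ⟨(⟨i - 1, by omega⟩, ⟨j, hj⟩), by simp [mRel, h0, h2]; omega⟩

lemma mGood_tileable {a b t} (h : mGood a b t) (hb : 0 < b) : mobFaultFreeTileable a b := by
  obtain ⟨h1, h2, h3⟩ := h
  refine ⟨{p | ∃ c d, mRel a b t c d ∧ p = s(c, d)}, ⟨?_, ?_⟩, ?_, ?_, ?_⟩
  · rintro p ⟨c, d, hr, rfl⟩
    exact ⟨c, d, mRel_adj hr, rfl⟩
  · intro x
    obtain ⟨d, hd⟩ := mRel_ex h1 x
    refine ⟨s(x, d), ⟨⟨x, d, hd, rfl⟩, by simp⟩, ?_⟩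
    rintro p ⟨⟨c, e, hr, rfl⟩, hx⟩
    rcases Sym2.mem_iff.1 hx with rfl | rfl
    · rw [mRel_unique hr hd]
    · rw [mRel_unique (mRel_symm hr) hd, Sym2.eq_swap]
  · intro i hi
    have key : ∀ k, k + 1 < a → ∀ j < b, t k j = 2 → (k = i ∨ k = a - 2 - i) →
        ∃ c d : Fin a × Fin b, s(c, d) ∈ {p | ∃ c d, mRel a b t c d ∧ p = s(c, d)} ∧
        c.2 = d.2 ∧ (d.1 : ℕ) = (c.1 : ℕ) + 1 ∧ ((c.1 : ℕ) = i ∨ (c.1 : ℕ) = a - 2 - i) := by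
      intro k hk j hj ht hki
      have hh : t (k + 1) j = 3 := by
        have := h1 k (by omega) j hj
        omega
      exact ⟨(⟨k, by omega⟩, ⟨j, hj⟩), (⟨k + 1, hk⟩, ⟨j, hj⟩),
        ⟨_, _, by simp [mRel, ht, hh], rfl⟩, rfl, rfl, hki⟩
    obtain ⟨j, hj, ht | ht⟩ := h2 i (by omega)
    · exact key i hi j hj ht (Or.inl rfl)
    · exact key _ (by omega) j hj ht (Or.inr rfl)
  · intro j hj
    obtain ⟨i, hi, ht⟩ := h3 j (by omega)
    have hh : t i (j + 1) = 1 := by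
      have := h1 i hi j (by omega)
      omega
    exact ⟨(⟨i, hi⟩, ⟨j, by omega⟩), (⟨i, hi⟩, ⟨j + 1, hj⟩),
      ⟨_, _, by simp [mRel, ht, hh], rfl⟩, rfl, rfl, rfl⟩
  · obtain ⟨i, hi, ht⟩ := h3 (b - 1) (by omega)
    have hh : t (a - 1 - i) 0 = 1 := by
      have := h1 i hi (b - 1) (by omega)
      omega
    exact ⟨(⟨i, hi⟩, ⟨b - 1, by omega⟩), (⟨a - 1 - i, by omega⟩, ⟨0, hb⟩),
      ⟨_, _, by simp [mRel, ht, hh], rfl⟩, rfl, rfl, rfl⟩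

/-! ### Widening by two columns -/

def mWide (t : ℕ → ℕ → ℕ) (i j : ℕ) : ℕ :=
  if j = 0 then t i 0
  else if j = 1 then (if t i 0 = 0 then 1 else 0)
  else if j = 2 then (if t i 0 = 0 then 0 else 1)
  else t i (j - 2)

lemma mWide_good {a b t} (h : mGood a b t) (hb : 2 ≤ b) (hu : ∃ i < a, t i 0 ≠ 0) :
    mGood a (b + 2) (mWide t) := by
  obtain ⟨h1, h2, h3⟩ := h
  have e0 : ∀ i, mWide t i 0 = t i 0 := fun i => rfl
  have e1 : ∀ i, mWide t i 1 = (if t i 0 = 0 then 1 else 0) := fun i => rfl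
  have e2 : ∀ i, mWide t i 2 = (if t i 0 = 0 then 0 else 1) := fun i => rfl
  have e3 : ∀ i j, 1 ≤ j → mWide t i (j + 2) = t i j := by
    intro i j hj
    unfold mWide
    rw [if_neg (by omega), if_neg (by omega), if_neg (by omega)]; rfl
  refine ⟨?_, ?_, ?_⟩
  · intro i hi j hj
    have hl : mWide t (a - 1 - i) (b + 2 - 1) = t (a - 1 - i) (b - 1) := by
      have := e3 (a - 1 - i) (b - 1) (by omega)
      rwa [show b - 1 + 2 = b + 2 - 1 by omega] at this
    rw [hl, e0]
    rcases (by omega : j = 0 ∨ j = 1 ∨ j = 2 ∨ 2 < j) with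
      rfl | rfl | rfl | hj2
    · have := h1 i hi 0 (by omega)
      have q1 := e1 i
      simp only [e0]
      simp only [zero_add, q1]
      grind
    · have q0 := e0 i
      have q2 := e2 i
      simp only [e1]
      simp only [Nat.reduceAdd, q2, Nat.sub_self, q0]
      grind
    · have := h1 i hi 0 (by omega)
      have q1 := e1 i
      have q2 := e2 i
      have q3 := e3 i 1 (by omega)
      have z : mWide t i (2 - 1) = mWide t i 1 := rfl
      have z' : mWide t i (2 + 1) = mWide t i (1 + 2) := rfl
      rw [z, z', q1, q2, q3]
      have := h1 i hi 1 (by omega)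
      grind
    · obtain ⟨k, rfl⟩ : ∃ k, j = k + 2 := ⟨j - 2, by omega⟩
      have hk : 1 ≤ k := by omega
      have h' := h1 i hi k (by omega)
      have q : mWide t i (k + 2 + 1) = t i (k + 1) := e3 i (k + 1) (by omega)
      have q' : 1 < k → mWide t i (k + 2 - 1) = t i (k - 1) := by
        intro hk
        have := e3 i (k - 1) (by omega)
        rwa [show k - 1 + 2 = k + 2 - 1 by omega] at this
      have q2 : k = 1 → mWide t i (k + 2 - 1) = if t i (k - 1) = 0 then 0 else 1 := by
        rintro rfl; exact e2 i
      rw [q, e3 _ _ hk, e3 _ _ hk, e3 _ _ hk]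
      rcases (by omega : k = 1 ∨ 1 < k) with hk1 | hk1
      · rw [q2 hk1]
        grind
      · rw [q' hk1]; grind
  · intro i hi
    obtain ⟨j, hj, h⟩ := h2 i hi
    rcases Nat.eq_zero_or_pos j with rfl | hp
    · exact ⟨0, by omega, h⟩
    · exact ⟨j + 2, by omega, by rwa [e3 _ _ hp, e3 _ _ hp]⟩
  · intro j hj
    rcases (by omega : j = 0 ∨ j = 1 ∨ j = 2 ∨ 2 < j) with
      rfl | rfl | rfl | hj2
    · exact h3 0 (by omega)
    · obtain ⟨i, hi, hn⟩ := hu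
      exact ⟨i, hi, by rw [e1, if_neg hn]⟩
    · obtain ⟨i, hi, hn⟩ := h3 0 (by omega)
      exact ⟨i, hi, by rw [e2, if_pos hn]⟩
    · obtain ⟨k, rfl⟩ : ∃ k, j = k + 2 := ⟨j - 2, by omega⟩
      have hk : 1 ≤ k := by omega
      obtain ⟨i, hi, hn⟩ := h3 k (by omega)
      exact ⟨i, hi, by rw [e3 _ _ hk, hn]⟩

lemma mWide_iter {a b t} (h : mGood a b t) (hb : 2 ≤ b) (hu : ∃ i < a, t i 0 ≠ 0) (m : ℕ) :
    ∃ t', mGood a (b + 2 * m) t' ∧ ∀ i, t' i 0 = t i 0 := by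
  induction m with
  | zero => exact ⟨t, h, fun _ => rfl⟩
  | succ m ih =>
    obtain ⟨t', h', he⟩ := ih
    obtain ⟨i, hi, hn⟩ := hu
    exact ⟨mWide t', mWide_good h' (show 2 ≤ b + 2 * m by omega) ⟨i, hi, by rwa [he]⟩, he⟩

/-! ### Inserting two rows in the middle -/

def mMid (k : ℕ) (t : ℕ → ℕ → ℕ) (i j : ℕ) : ℕ :=
  if i < k then t i j
  else if i = k then (if t (k - 1) j = 2 then 3 else 2)
  else if i = k + 1 then (if t (k - 1) j = 2 then 2 else 3)
  else t (i - 2) j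

lemma mMid_good {k b t} (h : mGood (2 * k) b t) (hk : 1 ≤ k)
    (hu : ∃ j < b, t (k - 1) j ≠ 2) :
    mGood (2 * (k + 1)) b (mMid k t) ∧ ∃ j < b, mMid k t (k + 1 - 1) j ≠ 2 := by
  obtain ⟨h1, h2, h3⟩ := h
  have e0 : ∀ i j, i < k → mMid k t i j = t i j := by
    intro i j hi; simp [mMid, hi]
  have e1 : ∀ j, mMid k t k j = (if t (k - 1) j = 2 then 3 else 2) := by
    intro j; simp [mMid]
  have e2 : ∀ j, mMid k t (k + 1) j = (if t (k - 1) j = 2 then 2 else 3) := by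
    intro j; simp [mMid]
  have e3 : ∀ i j, k + 2 ≤ i → mMid k t i j = t (i - 2) j := by
    intro i j hi
    unfold mMid
    rw [if_neg (by omega), if_neg (by omega), if_neg (by omega)]
  have hc : ∃ j < b, t (k - 1) j = 2 := by
    obtain ⟨j, hj, h⟩ := h2 (k - 1) (by omega)
    rw [show 2 * k - 2 - (k - 1) = k - 1 by omega] at h
    exact ⟨j, hj, by tauto⟩
  refine ⟨⟨?_, ?_, ?_⟩, ?_⟩
  · clear h2 h3
    intro i hi j hj
    rcases (by omega : i < k ∨ i = k ∨ i = k + 1 ∨ k + 2 ≤ i) with hik | rfl | rfl | hik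
    · have h' := h1 i (by omega) j hj
      have q : ∀ j, mMid k t (2 * (k + 1) - 1 - i) j = t (2 * k - 1 - i) j := by
        intro j
        rw [e3 _ _ (by omega)]; congr 1; omega
      rw [q, q, e0 _ _ hik, e0 _ _ hik, e0 _ _ hik, e0 (i - 1) _ (by omega)]
      rcases (by omega : i + 1 < k ∨ i = k - 1) with h3 | h3
      · rw [e0 _ _ h3]; clear e0 e1 e2 e3 h1; grind
      · rw [show i + 1 = k by omega] at *
        rw [e1, ← h3]
        clear e0 e1 e2 e3 h1; grind
    · have q := e1 j
      have q2 := e2 j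
      have q3 := e0 (i - 1) j (by omega)
      rw [q, q2, q3]
      clear e0 e1 e2 e3 h1; grind
    · have q := e1 j
      have q2 := e2 j
      have q3 := e3 (k + 1 + 1) j (by omega)
      have h' := h1 (k - 1) (by omega) j hj
      rw [show k + 1 + 1 - 2 = k by omega] at q3
      rw [show k - 1 + 1 = k by omega] at h'
      rw [show k + 1 - 1 = k by omega, q, q2, q3]
      clear e0 e1 e2 e3 h1; grind
    · have h' := h1 (i - 2) (by omega) j hj
      have q : ∀ j, mMid k t (2 * (k + 1) - 1 - i) j = t (2 * k - 1 - (i - 2)) j := by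
        intro j
        rw [e0 _ _ (by omega)]; congr 1; omega
      rw [q, q, e3 _ _ hik, e3 _ _ hik, e3 _ _ hik, e3 (i + 1) _ (by omega),
        show i + 1 - 2 = i - 2 + 1 by omega]
      rcases (by omega : k + 2 < i ∨ i = k + 2) with h3 | h3
      · rw [e3 (i - 1) _ (by omega), show i - 1 - 2 = i - 2 - 1 by omega]; clear e0 e1 e2 e3 h1; grind
      · rw [show i - 1 = k + 1 by omega, e2, show k - 1 = i - 2 - 1 by omega]
        clear e0 e1 e2 e3 h1; grind
  · have key : ∀ i < k, (∃ j < b, mMid k t i j = 2 ∨ mMid k t (2 * (k + 1) - 2 - i) j = 2) := by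
      intro i hi
      obtain ⟨j, hj, h⟩ := h2 i (by omega)
      refine ⟨j, hj, ?_⟩
      rw [e0 _ _ hi]
      rcases (by omega : i + 1 < k ∨ i = k - 1) with h3 | h3
      · rw [e3 _ _ (by omega), show 2 * (k + 1) - 2 - i - 2 = 2 * k - 2 - i by omega]
        exact h
      · rw [show 2 * k - 2 - i = i by omega] at h
        left; tauto
    intro i hi
    rcases (by omega : i < k ∨ i = k ∨ k < i) with h | rfl | h
    · exact key i h
    · obtain ⟨j, hj, h⟩ := hu
      exact ⟨j, hj, Or.inl (by rw [e1, if_neg h])⟩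
    · obtain ⟨j, hj, h'⟩ := key (2 * (k + 1) - 2 - i) (by omega)
      rw [show 2 * (k + 1) - 2 - (2 * (k + 1) - 2 - i) = i by omega] at h'
      exact ⟨j, hj, h'.symm⟩
  · intro j hj
    obtain ⟨i, hi, h⟩ := h3 j hj
    rcases lt_or_ge i k with hik | hik
    · exact ⟨i, by omega, by rw [e0 _ _ hik, h]⟩
    · exact ⟨i + 2, by omega, by rw [e3 _ _ (by omega)]; exact h⟩
  · obtain ⟨j, hj, h⟩ := hc
    refine ⟨j, hj, ?_⟩
    rw [show k + 1 - 1 = k by omega, e1, if_pos h]; omega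

lemma mMid_iter {k b t} (h : mGood (2 * k) b t) (hk : 1 ≤ k)
    (hu : ∃ j < b, t (k - 1) j ≠ 2) (n : ℕ) :
    ∃ t', mGood (2 * (k + n)) b t' ∧ ∃ j < b, t' (k + n - 1) j ≠ 2 := by
  induction n with
  | zero => exact ⟨t, h, hu⟩
  | succ n ih =>
    obtain ⟨t', h', he⟩ := ih
    exact ⟨_, mMid_good h' (show 1 ≤ k + n by omega) he⟩

/-! ### Adding a boundary ring -/

def mRing (a q : ℕ) (t : ℕ → ℕ → ℕ) (i j : ℕ) : ℕ :=
  if i = 0 then (if j = q ∨ j = q + 1 then 2 else j % 2)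
  else if i = a + 1 then j % 2
  else if i = 1 ∧ (j = q ∨ j = q + 1) then 3
  else t (i - 1) j

lemma mRing_good {a b q t} (h : mGood a b t) (ha : 2 ≤ a) (hb : b % 2 = 0) (hq : q % 2 = 0)
    (hqb : q + 1 < b) (hu : t 0 q = 0) :
    mGood (a + 2) b (mRing a q t) := by
  obtain ⟨h1, h2, h3⟩ := h
  have e0 : ∀ j, mRing a q t 0 j = (if j = q ∨ j = q + 1 then 2 else j % 2) := fun j => rfl
  have e1 : ∀ j, mRing a q t (a + 1) j = j % 2 := by
    intro j; simp [mRing]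
  have e2 : ∀ j, mRing a q t 1 j = (if j = q ∨ j = q + 1 then 3 else t 0 j) := by
    intro j
    simp only [mRing]
    rw [if_neg (by omega), if_neg (by omega)]
    simp
  have e3 : ∀ i j, 2 ≤ i → i ≤ a → mRing a q t i j = t (i - 1) j := by
    intro i j hi hi'
    unfold mRing
    rw [if_neg (by omega), if_neg (by omega), if_neg (by omega)]
  have hu' : t 0 (q + 1) = 1 := by
    have := h1 0 (by omega) q (by omega)
    omega
  refine ⟨?_, ?_, ?_⟩
  · clear h2 h3
    intro i hi j hj
    rcases (by omega : i = 0 ∨ i = a + 1 ∨ i = 1 ∨ (2 ≤ i ∧ i ≤ a)) with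
      rfl | rfl | rfl | ⟨hi2, hia⟩
    · rw [show a + 2 - 1 - 0 = a + 1 by omega, e1, e1, e0, e0, e0, zero_add, e2]
      clear e0 e1 e2 e3 h1; grind
    · rw [show a + 2 - 1 - (a + 1) = 0 by omega, e1, e1, e1, e0, e0]
      clear e0 e1 e2 e3 h1; grind
    · have h' := h1 0 (by omega) j hj
      rw [show a + 2 - 1 - 1 = a by omega, e2, e2, e2, e3 a _ (by omega) (by omega),
        e3 a _ (by omega) (by omega), e3 (1 + 1) _ (by omega) (by omega), Nat.sub_self, e0]
      rw [show 1 + 1 - 1 = 0 + 1 by omega]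
      rw [Nat.sub_zero] at h'
      rcases (by omega : j = q ∨ j = q + 1 ∨ j + 1 = q ∨ j = q + 2 ∨
        (j ≠ q ∧ j ≠ q + 1 ∧ j + 1 ≠ q ∧ j ≠ q + 2)) with rfl | rfl | hq | rfl | hq
      · simp
      · simp
      · subst hq
        clear e0 e1 e2 e3 h1; grind
      · rw [show q + 2 - 1 = q + 1 by omega] at *
        clear e0 e1 e2 e3 h1; grind
      · clear e0 e1 e2 e3 h1; grind
    · have h' := h1 (i - 1) (by omega) j hj
      have up : t (i - 1 - 1) j = 2 → mRing a q t (i - 1) j = 2 := by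
        intro h
        rcases (by omega : i = 2 ∨ 2 < i) with rfl | hi3
        · rw [show 2 - 1 = 1 by omega, e2, if_neg]
          · exact h
          · rintro (rfl | rfl)
            · simp [hu] at h
            · simp [hu'] at h
        · rw [e3 _ _ (by omega) (by omega), h]
      have dn : i - 1 + 1 < a → mRing a q t (i + 1) j = t (i - 1 + 1) j := by
        intro h
        rw [e3 _ _ (by omega) (by omega)]; congr 1; omega
      have s0 : t (a - 1 - (i - 1)) 0 = 1 → mRing a q t (a + 2 - 1 - i) 0 = 1 := by
        intro h
        rcases (by omega : i = a ∨ i < a) with rfl | hi3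
        · rw [show i - 1 - (i - 1) = 0 by omega] at h
          rw [show i + 2 - 1 - i = 1 by omega, e2, if_neg, h]
          rintro (rfl | h)
          · omega
          · omega
        · rw [e3 _ _ (by omega) (by omega), ← h]; congr 1; omega
      have s1 : t (a - 1 - (i - 1)) (b - 1) = 0 → mRing a q t (a + 2 - 1 - i) (b - 1) = 0 := by
        intro h
        rcases (by omega : i = a ∨ i < a) with rfl | hi3
        · rw [show i - 1 - (i - 1) = 0 by omega] at h
          rw [show i + 2 - 1 - i = 1 by omega, e2, if_neg, h]
          rintro (h4 | h4)
          · omega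
          · rw [h4] at h; omega
        · rw [e3 _ _ (by omega) (by omega), ← h]; congr 1; omega
      rw [e3 i _ hi2 hia, e3 i _ hi2 hia, e3 i _ hi2 hia]
      clear e0 e1 e2 e3 h1
      rcases h' with ⟨h0, ⟨h1, h2⟩ | ⟨h1, h2⟩⟩ | ⟨h0, ⟨h1, h2⟩ | ⟨h1, h2⟩⟩ |
        ⟨h0, h1, h2⟩ | ⟨h0, h1, h2⟩
      · exact Or.inl ⟨h0, Or.inl ⟨h1, h2⟩⟩
      · exact Or.inl ⟨h0, Or.inr ⟨h1, s0 h2⟩⟩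
      · exact Or.inr (Or.inl ⟨h0, Or.inl ⟨h1, h2⟩⟩)
      · exact Or.inr (Or.inl ⟨h0, Or.inr ⟨h1, s1 h2⟩⟩)
      · exact Or.inr (Or.inr (Or.inl ⟨h0, by omega, (dn h1).trans h2⟩))
      · exact Or.inr (Or.inr (Or.inr ⟨h0, by omega, up h2⟩))
  · have e4 : ∀ i j, i < a → t i j = 2 → mRing a q t (i + 1) j = 2 := by
      intro i j hi h
      rcases Nat.eq_zero_or_pos i with rfl | hp
      · rw [zero_add, e2, if_neg, h]
        rintro (rfl | rfl) <;> omega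
      · rw [e3 _ _ (by omega) (by omega)]; exact h
    have eq2 : mRing a q t 0 q = 2 := by rw [e0]; simp
    intro i hi
    rcases (by omega : i = 0 ∨ i = a ∨ (0 < i ∧ i < a)) with rfl | rfl | ⟨hp, hia⟩
    · exact ⟨q, by omega, Or.inl eq2⟩
    · refine ⟨q, by omega, Or.inr ?_⟩
      rw [show i + 2 - 2 - i = 0 by omega, eq2]
    · obtain ⟨j, hj, h⟩ := h2 (i - 1) (by omega)
      refine ⟨j, hj, ?_⟩
      rcases h with h | h
      · left
        have := e4 _ _ (by omega) h
        rwa [show i - 1 + 1 = i by omega] at this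
      · right
        have := e4 _ _ (by omega) h
        rwa [show a - 2 - (i - 1) + 1 = a + 2 - 2 - i by omega] at this
  · intro j hj
    rcases Nat.mod_two_eq_zero_or_one j with hj2 | hj2
    · exact ⟨a + 1, by omega, by rw [e1, hj2]⟩
    · obtain ⟨i, hi, h⟩ := h3 j hj
      refine ⟨i + 1, by omega, ?_⟩
      rcases Nat.eq_zero_or_pos i with rfl | hp
      · rw [zero_add, e2, if_neg, h]
        rintro (rfl | rfl) <;> omega
      · rw [e3 _ _ (by omega) (by omega)]; exact h

lemma mRing_iter {a b t} (h : mGood a b t) (ha : 2 ≤ a) (hb : b % 2 = 0) (hb4 : 4 ≤ b)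
    (hu : t 0 0 = 0) (n : ℕ) :
    ∃ t', mGood (a + 2 * n) b t' ∧ (t' 0 0 = 0 ∨ t' 0 2 = 0) := by
  induction n with
  | zero => exact ⟨t, h, Or.inl hu⟩
  | succ n ih =>
    obtain ⟨t', h', he | he⟩ := ih
    · exact ⟨_, mRing_good h' (show 2 ≤ a + 2 * n by omega) hb (by omega : 0 % 2 = 0) (by omega) he,
        Or.inr (by simp [mRing])⟩
    · exact ⟨_, mRing_good h' (show 2 ≤ a + 2 * n by omega) hb (by omega : 2 % 2 = 0) (by omega) he,
        Or.inl (by simp [mRing])⟩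

/-! ### Base boards -/

def mTab (L : List (List ℕ)) (i j : ℕ) : ℕ := (L.getD i []).getD j 0

def mB43 : ℕ → ℕ → ℕ := mTab [[0, 1, 0], [2, 0, 1], [3, 2, 2], [1, 3, 3]]

def mB54 : ℕ → ℕ → ℕ :=
  mTab [[0, 1, 2, 0], [0, 1, 3, 2], [2, 0, 1, 3], [3, 2, 0, 1], [1, 3, 0, 1]]

def mB66 : ℕ → ℕ → ℕ :=
  mTab [[0, 1, 2, 0, 1, 0], [0, 1, 3, 0, 1, 0], [2, 0, 1, 2, 0, 1], [3, 0, 1, 3, 2, 2],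
    [1, 2, 0, 1, 3, 3], [1, 3, 0, 1, 0, 1]]

def mB84 : ℕ → ℕ → ℕ :=
  mTab [[0, 1, 2, 0], [0, 1, 3, 2], [2, 0, 1, 3], [3, 2, 2, 0], [1, 3, 3, 2], [2, 0, 1, 3],
    [3, 2, 0, 1], [1, 3, 0, 1]]

lemma mEven {k b t} (h : mGood (2 * k) b t) (hk : 1 ≤ k) (hb : 2 ≤ b)
    (hu : ∃ i < 2 * k, t i 0 ≠ 0) (hv : ∃ j < b, t (k - 1) j ≠ 2) (n m : ℕ) :
    mobFaultFreeTileable (2 * k + 2 * n) (b + 2 * m) := by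
  have hw : ∃ t', mGood (2 * k) (b + 2 * m) t' ∧ ∃ j < b + 2 * m, t' (k - 1) j ≠ 2 := by
    rcases Nat.eq_zero_or_pos m with rfl | hm
    · exact ⟨t, h, hv⟩
    · obtain ⟨m, rfl⟩ : ∃ l, m = l + 1 := ⟨m - 1, by omega⟩
      obtain ⟨t', h', he⟩ := mWide_iter h hb hu m
      obtain ⟨i, hi, hn⟩ := hu
      refine ⟨mWide t', mWide_good h' (show 2 ≤ b + 2 * m by omega) ⟨i, hi, by rwa [he]⟩, 1, by omega, ?_⟩
      change (if t' (k - 1) 0 = 0 then 1 else 0) ≠ 2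
      split_ifs <;> decide
  obtain ⟨t', h', hv'⟩ := hw
  obtain ⟨t2, h2, -⟩ := mMid_iter h' hk hv' n
  rw [mul_add] at h2
  exact mGood_tileable h2 (by omega)

/-- For all natural numbers `n` and `m`, each of the Möbius strip boards
`(4+2n)″ × (3+2m)`, `(5+2n)″ × (4+2m)`, `(4+2n)″ × (5+2m)`, `(6+2n)″ × (6+2m)`,
and `(8+2n)″ × (4+2m)` admits a fault-free domino tiling. -/
theorem mob_faultFree_families :
    ∀ n m : ℕ,
      mobFaultFreeTileable (4 + 2 * n) (3 + 2 * m) ∧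
      mobFaultFreeTileable (5 + 2 * n) (4 + 2 * m) ∧
      mobFaultFreeTileable (4 + 2 * n) (5 + 2 * m) ∧
      mobFaultFreeTileable (6 + 2 * n) (6 + 2 * m) ∧
      mobFaultFreeTileable (8 + 2 * n) (4 + 2 * m) := by
  intro n m
  have A : ∀ m, mobFaultFreeTileable (4 + 2 * n) (3 + 2 * m) := fun m =>
    mEven (k := 2) (t := mB43) (by decide) (by omega) (by omega)
      ⟨1, by omega, by decide⟩ ⟨1, by omega, by decide⟩ n m
  refine ⟨A m, ?_, ?_, ?_, ?_⟩
  · obtain ⟨t, h, he⟩ := mWide_iter (a := 5) (b := 4) (t := mB54) (by decide) (by omega)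
      ⟨2, by omega, by decide⟩ m
    obtain ⟨t2, h2, -⟩ := mRing_iter h (by omega) (by omega) (by omega)
      (by rw [he]; decide) n
    exact mGood_tileable h2 (by omega)
  · have := A (m + 1)
    rwa [show 3 + 2 * (m + 1) = 5 + 2 * m by omega] at this
  · exact mEven (k := 3) (t := mB66) (by decide) (by omega) (by omega)
      ⟨2, by omega, by decide⟩ ⟨1, by omega, by decide⟩ n m
  · exact mEven (k := 4) (t := mB84) (by decide) (by omega) (by omega)
      ⟨2, by omega, by decide⟩ ⟨0, by omega, by decide⟩ n m
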